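/- Let n ≥ 4 and let p, q, r, s be four pairwise distinct indices in {1,…,n}, and let k ≥ 1. The n-tuple of complex polynomials u = −(x_r + i x_s)(x_p + i x_q)^{k−1}·(ς_p + i ς_q) + (x_p + i x_q)^k·(ς_r + i ς_s), where ς_j is the j-th standard basis vector, satisfies the complex Navier equations: Δu_j + b·∂_{x_j}(∑_l ∂_{x_l} u_l) = 0 for all j. -/

import Mathlib

open MvPolynomial

/-- The Laplacian `Δ = ∑ᵣ ∂²_{xᵣ}` on `ℂ[x₁,…,xₙ]`. -/
noncomputable def lapC {n : ℕ} (p : MvPolynomial (Fin n) ℂ) : MvPolynomial (Fin n) ℂ :=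
  ∑ r : Fin n, pderiv r (pderiv r p)

/-- The complexified Navier operator `N(u)ⱼ = Δuⱼ + b·∂_{xⱼ}(∑ᵣ ∂_{xᵣ} uᵣ)`. -/
noncomputable def navierC {n : ℕ} (b : ℝ) (u : Fin n → MvPolynomial (Fin n) ℂ) :
    Fin n → MvPolynomial (Fin n) ℂ :=
  fun j => lapC (u j) + C (b : ℂ) * pderiv j (∑ r : Fin n, pderiv r (u r))

/-- The `j`-th standard basis vector `ς_j` (as a tuple of polynomials). -/
noncomputable def sigmaV {n : ℕ} (j : Fin n) : Fin n → MvPolynomial (Fin n) ℂ :=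
  fun r => if r = j then 1 else 0

/-!
A componentwise harmonic, divergence-free vector field solves the Navier equations for every `b`.
Let `z = a · x` and `w = c · x` with `a · a = a · c = 0`. The derivatives along `a` and `c` kill
`z`, and the one along `a` also kills `w`. The gradients of `z^m` and of `w z^m` are combinations
of the constant fields `a` and `c` whose coefficients are killed by the corresponding derivative,
so both polynomials are harmonic; the field `-(w z^m) a + z^(m+1) c` is divergence-free for the
same reason. The vectors `ς_p + i ς_q` and `ς_r + i ς_s` are such a pair `a`, `c`.
-/

section PolynomialVectorFields

variable {R σ : Type*} [CommSemiring R] [Fintype σ]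

/-- The divergence `∑ᵣ ∂ᵣ uᵣ` of a polynomial vector field. -/
noncomputable def polyDivergence (u : σ → MvPolynomial σ R) : MvPolynomial σ R :=
  ∑ r, pderiv r (u r)

/-- The Laplacian `∑ᵣ ∂ᵣ²` on polynomials over any commutative semiring, as a linear map. -/
noncomputable def polyLaplacian : MvPolynomial σ R →ₗ[R] MvPolynomial σ R :=
  ∑ r, (pderiv r).toLinearMap ∘ₗ (pderiv r).toLinearMap

/-- The Navier operator `u ↦ Δu + b ∇(div u)` over any commutative semiring. -/
noncomputable def polyNavier (b : R) (u : σ → MvPolynomial σ R) : σ → MvPolynomial σ R :=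
  fun j => polyLaplacian (u j) + b • pderiv j (polyDivergence u)

/-- The linear form `∑ᵢ aᵢ xᵢ` with coefficient vector `a`, depending linearly on `a`. -/
noncomputable def linearForm : (σ → R) →ₗ[R] MvPolynomial σ R :=
  Fintype.linearCombination R X

/-- The directional derivative `∑ₗ aₗ ∂ₗ` along the constant vector `a`. -/
noncomputable def dirDeriv (a : σ → R) : Derivation R (MvPolynomial σ R) (MvPolynomial σ R) :=
  ∑ l, a l • pderiv l

theorem polyLaplacian_eq_polyDivergence (f : MvPolynomial σ R) :
    polyLaplacian f = polyDivergence fun l => pderiv l f := by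
  simp [polyLaplacian, polyDivergence]

theorem polyNavier_eq_zero_of_harmonic_of_divergenceFree {u : σ → MvPolynomial σ R}
    (hharm : ∀ j, polyLaplacian (u j) = 0) (hdiv : polyDivergence u = 0) (b : R) :
    polyNavier b u = 0 := by
  ext1 j
  simp [polyNavier, hharm, hdiv]

theorem dirDeriv_apply (a : σ → R) (f : MvPolynomial σ R) :
    dirDeriv a f = ∑ l, a l • pderiv l f := by
  have hcoe : ⇑(dirDeriv a) = ∑ l, ⇑(a l • pderiv (R := R) l) :=
    map_sum Derivation.coeFnAddMonoidHom _ _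
  simp [hcoe]

theorem polyDivergence_smul_add_smul (a c : σ → R) (f g : MvPolynomial σ R) :
    polyDivergence (fun l => a l • f + c l • g) = dirDeriv a f + dirDeriv c g := by
  simp [polyDivergence, dirDeriv_apply, Finset.sum_add_distrib]

theorem linearForm_single [DecidableEq σ] (p : σ) (t : R) :
    linearForm (Pi.single p t) = C t * X p := by
  rw [linearForm, Fintype.linearCombination_apply_single, smul_eq_C_mul]

theorem pderiv_linearForm (a : σ → R) (l : σ) : pderiv l (linearForm a) = C (a l) := by
  classical
  simp [linearForm, Fintype.linearCombination_apply, pderiv_X, Pi.single_apply, smul_eq_C_mul]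

theorem dirDeriv_linearForm (a c : σ → R) : dirDeriv a (linearForm c) = C (a ⬝ᵥ c) := by
  simp [dirDeriv_apply, pderiv_linearForm, dotProduct, smul_eq_C_mul]

theorem dirDeriv_linearForm_pow_eq_zero {a c : σ → R} (hac : a ⬝ᵥ c = 0) (m : ℕ) :
    dirDeriv a (linearForm c ^ m) = 0 := by
  simp [Derivation.leibniz_pow, dirDeriv_linearForm, hac]

theorem dirDeriv_linearForm_mul_pow_eq_zero {a c : σ → R} (ha : a ⬝ᵥ a = 0) (hac : a ⬝ᵥ c = 0)
    (m : ℕ) : dirDeriv a (linearForm c * linearForm a ^ m) = 0 := by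
  simp [Derivation.leibniz, dirDeriv_linearForm, hac, dirDeriv_linearForm_pow_eq_zero ha]

theorem pderiv_linearForm_pow (a : σ → R) (m : ℕ) (l : σ) :
    pderiv l (linearForm a ^ m) = a l • (m • linearForm a ^ (m - 1)) := by
  simp only [Derivation.leibniz_pow, pderiv_linearForm, smul_eq_C_mul, smul_eq_mul, nsmul_eq_mul]
  ring

theorem pderiv_linearForm_mul_pow (a c : σ → R) (m : ℕ) (l : σ) :
    pderiv l (linearForm c * linearForm a ^ m) =
      a l • (m • (linearForm c * linearForm a ^ (m - 1))) + c l • linearForm a ^ m := by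
  simp only [Derivation.leibniz, pderiv_linearForm_pow, pderiv_linearForm, smul_eq_C_mul,
    smul_eq_mul, nsmul_eq_mul]
  ring

theorem polyLaplacian_linearForm_pow_eq_zero {a : σ → R} (ha : a ⬝ᵥ a = 0) (m : ℕ) :
    polyLaplacian (linearForm a ^ m) = 0 := by
  calc polyLaplacian (linearForm a ^ m)
      = ∑ l, a l • pderiv l (m • linearForm a ^ (m - 1)) := by
        simp only [polyLaplacian_eq_polyDivergence, polyDivergence, pderiv_linearForm_pow,
          Derivation.map_smul]
    _ = m • dirDeriv a (linearForm a ^ (m - 1)) := by rw [← dirDeriv_apply, map_nsmul]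
    _ = 0 := by rw [dirDeriv_linearForm_pow_eq_zero ha, smul_zero]

theorem polyLaplacian_linearForm_mul_pow_eq_zero {a c : σ → R} (ha : a ⬝ᵥ a = 0)
    (hac : a ⬝ᵥ c = 0) (m : ℕ) : polyLaplacian (linearForm c * linearForm a ^ m) = 0 := by
  have hca : c ⬝ᵥ a = 0 := by rw [dotProduct_comm, hac]
  calc polyLaplacian (linearForm c * linearForm a ^ m)
      = m • dirDeriv a (linearForm c * linearForm a ^ (m - 1)) + dirDeriv c (linearForm a ^ m) := by
        simp only [polyLaplacian_eq_polyDivergence, pderiv_linearForm_mul_pow,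
          polyDivergence_smul_add_smul, map_nsmul]
    _ = 0 := by
        rw [dirDeriv_linearForm_mul_pow_eq_zero ha hac, dirDeriv_linearForm_pow_eq_zero hca,
          smul_zero, add_zero]

theorem navier_solution_v2_general {R : Type*} [CommRing R] (b : R) {a c : σ → R}
    (ha : a ⬝ᵥ a = 0) (hac : a ⬝ᵥ c = 0) (m : ℕ) :
    polyNavier b (fun l =>
      a l • -(linearForm c * linearForm a ^ m) + c l • linearForm a ^ (m + 1)) = 0 := by
  have hca : c ⬝ᵥ a = 0 := by rw [dotProduct_comm, hac]
  refine polyNavier_eq_zero_of_harmonic_of_divergenceFree (fun j => ?_) ?_ b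
  · rw [map_add, map_smul, map_smul, map_neg, polyLaplacian_linearForm_mul_pow_eq_zero ha hac,
      polyLaplacian_linearForm_pow_eq_zero ha, neg_zero, smul_zero, smul_zero, add_zero]
  · rw [polyDivergence_smul_add_smul, map_neg, dirDeriv_linearForm_mul_pow_eq_zero ha hac,
      dirDeriv_linearForm_pow_eq_zero hca, neg_zero, add_zero]

end PolynomialVectorFields

section CoordinatePairs

variable {R σ : Type*} [CommSemiring R] [Fintype σ] [DecidableEq σ]

/-- The vector `ς_p + i ς_q`, for an arbitrary scalar `i`; it is isotropic when `i² = -1` and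
`p ≠ q`. -/
def pairVec (i : R) (p q : σ) : σ → R :=
  Pi.single p 1 + Pi.single q i

theorem linearForm_pairVec (i : R) (p q : σ) : linearForm (pairVec i p q) = X p + C i * X q := by
  rw [pairVec, map_add, linearForm_single, linearForm_single, C_1, one_mul]

theorem pairVec_dotProduct_self {R : Type*} [CommRing R] {i : R} (hi : i * i = -1) {p q : σ}
    (hpq : p ≠ q) :
    pairVec i p q ⬝ᵥ pairVec i p q = 0 := by
  simp [pairVec, hpq, hpq.symm, hi]

theorem pairVec_dotProduct_pairVec (i i' : R) {p q r s : σ} (hpr : p ≠ r) (hps : p ≠ s)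
    (hqr : q ≠ r) (hqs : q ≠ s) : pairVec i p q ⬝ᵥ pairVec i' r s = 0 := by
  simp [pairVec, hpr, hps, hqr, hqs]

end CoordinatePairs

theorem navierC_eq_polyNavier {n : ℕ} (b : ℝ) (u : Fin n → MvPolynomial (Fin n) ℂ) :
    navierC b u = polyNavier (b : ℂ) u := by
  ext1 j
  simp [navierC, lapC, polyNavier, polyDivergence, polyLaplacian, smul_eq_C_mul]

theorem pairVec_smul {n : ℕ} (i : ℂ) (p q l : Fin n) (f : MvPolynomial (Fin n) ℂ) :
    pairVec i p q l • f = f * (sigmaV p l + C i * sigmaV q l) := by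
  have hC : C (pairVec i p q l) = sigmaV p l + C i * sigmaV q l := by
    simp [pairVec, sigmaV, Pi.single_apply, apply_ite C]
  rw [smul_eq_C_mul, hC, mul_comm]

/-- for pairwise distinct `p, q, r, s` and `k ≥ 1`, the tuple
`u = −(x_r + i x_s)(x_p + i x_q)^{k−1}·(ς_p + i ς_q) + (x_p + i x_q)^k·(ς_r + i ς_s)`
satisfies the complex Navier equations. -/
theorem navier_solution_v2 (n : ℕ) (hn : 4 ≤ n) (b : ℝ) (hb : b ≠ 0)
    (hb1 : 0 < b + 1) (p q r s : Fin n)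
    (hpq : p ≠ q) (hpr : p ≠ r) (hps : p ≠ s) (hqr : q ≠ r) (hqs : q ≠ s)
    (hrs : r ≠ s) (k : ℕ) (hk : 1 ≤ k) :
    ∀ j, navierC b
      (fun l =>
        -((X r + C Complex.I * X s) * (X p + C Complex.I * X q) ^ (k - 1)) *
            (sigmaV p l + C Complex.I * sigmaV q l)
          + (X p + C Complex.I * X q) ^ k *
            (sigmaV r l + C Complex.I * sigmaV s l)) j = 0 := by
  obtain ⟨m, rfl⟩ := Nat.exists_eq_add_of_le' hk
  simpa only [funext_iff, navierC_eq_polyNavier, pairVec_smul, linearForm_pairVec,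
    Nat.add_sub_cancel, Pi.zero_apply] using
    navier_solution_v2_general (b : ℂ) (pairVec_dotProduct_self Complex.I_mul_I hpq)
      (pairVec_dotProduct_pairVec Complex.I Complex.I hpr hps hqr hqs) m
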